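/- arXiv:1710.00613 — 8 statements merged into one kernel-verified Lean document; each statement's English description precedes it below -/
import Mathlib

section
/- Let p be an odd prime. In the polynomial ring 𝔽_p[T], the Fibonacci polynomial f_{p-1} satisfies the identity f_{p-1} = (T² + 4)^((p-1)/2). -/
/-!
Over an algebraic closure `K` of `𝔽_p(T)`, write `s` for a square root of `T² + 4` and
`a, b = (T ± s) / 2` for the roots of `Y² - T Y - 1`. Binet's formula reads
`(a - b) f_n = a ^ (n + 1) - b ^ (n + 1)`; at `n = p - 1` the Frobenius turns the right-hand side
into `(a - b) ^ p`, so `f_{p-1} = (a - b) ^ (p - 1) = s ^ (p - 1) = (T² + 4) ^ ((p - 1) / 2)`.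
-/

open Polynomial

/-- The Fibonacci polynomials over `ZMod p`: `f 0 = 1`, `f 1 = T`,
`f n = T * f (n-1) + f (n-2)`. -/
noncomputable def fibPoly (p : ℕ) : ℕ → Polynomial (ZMod p)
  | 0 => 1
  | 1 => Polynomial.X
  | n + 2 => Polynomial.X * fibPoly p (n + 1) + fibPoly p n

/-- Binet's formula, for the image of `fibPoly` in any commutative algebra containing two
elements `a`, `b` with sum `X` and product `-1`. -/
theorem fibPoly_binet {p : ℕ} {K : Type*} [CommRing K] (φ : (ZMod p)[X] →+* K) (a b : K)
    (hsum : a + b = φ X) (hprod : a * b = -1) (n : ℕ) :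
    (a - b) * φ (fibPoly p n) = a ^ (n + 1) - b ^ (n + 1) := by
  induction n using Nat.twoStepInduction with
  | zero => simp [fibPoly]
  | one =>
    simp only [fibPoly, ← hsum]
    ring
  | more n ih0 ih1 =>
    simp only [fibPoly, map_add, map_mul, ← hsum]
    linear_combination (a + b) * ih1 + ih0 + (b ^ (n + 1) - a ^ (n + 1)) * (-hprod)

/-- The identity holds after any embedding of `𝔽_p[T]` into an algebraically closed field,
where Binet's formula can be evaluated. -/
theorem map_fibPoly_prime_sub_one {p : ℕ} [Fact p.Prime] (hodd : Odd p) {K : Type*} [Field K]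
    [IsAlgClosed K] (φ : (ZMod p)[X] →+* K) (hφ : Function.Injective φ) :
    φ (fibPoly p (p - 1)) = φ ((X ^ 2 + 4) ^ ((p - 1) / 2)) := by
  have : CharP K p := charP_of_injective_ringHom hφ p
  obtain ⟨s, hs⟩ := IsAlgClosed.exists_pow_nat_eq (φ (X ^ 2 + 4)) (n := 2) (by norm_num)
  have hs0 : s ≠ 0 := by
    rintro rfl
    have h : φ (X ^ 2 + 4) = 0 := by rw [← hs]; simp
    have h0 : (X ^ 2 + C 4 : (ZMod p)[X]) = 0 := (map_eq_zero_iff φ hφ).1 h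
    exact X_pow_add_C_ne_zero (by norm_num) 4 h0
  have h2 : (2 : K) ≠ 0 := Ring.two_ne_zero (by
    rw [ringChar.eq K p]
    rintro rfl
    exact absurd hodd (by decide))
  have hs_sq : s ^ 2 = φ X ^ 2 + 4 := by
    rw [hs, map_add, map_pow, map_ofNat]
  obtain ⟨k, rfl⟩ := hodd
  have hb := fibPoly_binet φ ((φ X + s) / 2) ((φ X - s) / 2) (by field_simp; ring)
    (by field_simp; linear_combination -hs_sq) (2 * k)
  rw [← sub_pow_char, show (φ X + s) / 2 - (φ X - s) / 2 = s by field_simp; ring, pow_succ',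
    pow_mul, hs] at hb
  rw [Nat.add_sub_cancel, Nat.mul_div_cancel_left k two_pos, map_pow]
  exact mul_left_cancel₀ hs0 hb

theorem stmt_0 (p : ℕ) (hp : p.Prime) (hodd : Odd p) :
    fibPoly p (p - 1) = (X ^ 2 + 4) ^ ((p - 1) / 2) := by
  have : Fact p.Prime := ⟨hp⟩
  let φ : (ZMod p)[X] →+* AlgebraicClosure (FractionRing (ZMod p)[X]) :=
    (algebraMap (FractionRing (ZMod p)[X]) _).comp (algebraMap _ _)
  have hφ : Function.Injective φ :=
    (algebraMap (FractionRing (ZMod p)[X]) _).injective.comp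
      (IsFractionRing.injective (ZMod p)[X] (FractionRing (ZMod p)[X]))
  exact hφ (map_fibPoly_prime_sub_one hodd φ hφ)
end

section
/- Let p be an odd prime. In the polynomial ring 𝔽_p[T], the Fibonacci polynomials satisfy the identity f_p + f_{p-2} = T^p. -/
open Polynomial

/-!
The sums `f (n + 2) + f n` are the Lucas polynomials: if `y` and `z` are the two roots of
`Y ^ 2 - T * Y - 1` in an extension ring, so that `y + z = T` and `y * z = -1`, then
`f (n + 2) + f n = y ^ (n + 2) + z ^ (n + 2)` (a Binet formula, `fibPoly_add_eq_pow_add_pow`).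
For `n + 2 = p`, the Frobenius map gives `y ^ p + z ^ p = (y + z) ^ p = T ^ p`. The extension
`AdjoinRoot (Y ^ 2 - T * Y - 1)` contains `𝔽_p[T]`, so the identity descends.
-/

/-- Binet formula for the Lucas polynomials `f (n + 2) + f n`. -/
lemma fibPoly_add_eq_pow_add_pow {p : ℕ} {A : Type*} [CommRing A]
    (φ : (ZMod p)[X] →+* A) (y z : A) (hadd : y + z = φ X) (hmul : y * z = -1) (n : ℕ) :
    φ (fibPoly p (n + 2) + fibPoly p n) = y ^ (n + 2) + z ^ (n + 2) := by
  induction n using Nat.twoStepInduction with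
  | zero =>
    simp only [fibPoly, map_add, map_mul, map_one, ← hadd]
    linear_combination 2 * hmul
  | one =>
    simp only [fibPoly, map_add, map_mul, map_one, ← hadd]
    linear_combination 3 * (y + z) * hmul
  | more n h0 h1 =>
    have hrec : fibPoly p (n + 2 + 2) + fibPoly p (n + 2)
        = X * (fibPoly p (n + 1 + 2) + fibPoly p (n + 1)) + (fibPoly p (n + 2) + fibPoly p n) := by
      rw [fibPoly, show fibPoly p (n + 2) = X * fibPoly p (n + 1) + fibPoly p n by rw [fibPoly]]
      ring
    rw [hrec, map_add, map_mul, h0, h1, ← hadd]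
    linear_combination (y ^ (n + 2) + z ^ (n + 2)) * hmul

theorem stmt_1 (p : ℕ) (hp : p.Prime) (hodd : Odd p) :
    fibPoly p p + fibPoly p (p - 2) = X ^ p := by
  haveI : Fact p.Prime := ⟨hp⟩
  let g : (ZMod p)[X][X] := X ^ 2 - C X * X - 1
  have hg : g.degree = 2 := by
    simp only [g]
    compute_degree!
  have hinj : Function.Injective (AdjoinRoot.of g) :=
    AdjoinRoot.of.injective_of_degree_ne_zero (by rw [hg]; decide)
  haveI : CharP (AdjoinRoot g) p := charP_of_injective_ringHom hinj p
  let y := AdjoinRoot.root g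
  have hy : y ^ 2 - AdjoinRoot.of g X * y - 1 = 0 := by
    have h := AdjoinRoot.eval₂_root g
    simpa [g, eval₂_sub, eval₂_mul] using h
  have hadd : y + (AdjoinRoot.of g X - y) = AdjoinRoot.of g X := by ring
  have hmul : y * (AdjoinRoot.of g X - y) = -1 := by linear_combination -hy
  have h := fibPoly_add_eq_pow_add_pow (AdjoinRoot.of g) y _ hadd hmul (p - 2)
  rw [Nat.sub_add_cancel hp.two_le, ← add_pow_char, hadd, ← map_pow] at h
  exact hinj h
end

section
/- Let p be an odd prime, F = (T² + 4)^((p-1)/2) ∈ 𝔽_p[T] and R = T^p − T·F ∈ 𝔽_p[T]. Then R = 2·f_{p-2}, where f_{p-2} is the (p−2)-th Fibonacci polynomial. -/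
/-!
Adjoin to `𝔽_p[T]` a root `ω` of `ω² = 1 + T ω`. The Fibonacci polynomials are the coordinates of
its powers: `ω ^ (n + 2) = f n + f (n + 1) ω`. The element `s = 2ω - T` satisfies `s² = T² + 4`,
so `s ^ p = F s` for odd `p`. Applying Frobenius to `ω + ω = s + T` gives
`2 ω ^ p = F (2ω - T) + T ^ p`, and the claim is the equality of the coordinates along `1`.
-/

open Polynomial

/-- The extension `𝔽_p[T][ω]` with `ω² = 1 + T ω`. -/
abbrev FibAlg (p : ℕ) : Type := QuadraticAlgebra (Polynomial (ZMod p)) 1 X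

/-- The adjoined root of `Y² = 1 + T Y`. -/
noncomputable def fibRoot (p : ℕ) : FibAlg p := ⟨0, 1⟩

theorem fibRoot_pow (p n : ℕ) :
    fibRoot p ^ (n + 2) = ⟨fibPoly p n, fibPoly p (n + 1)⟩ := by
  induction n with
  | zero => ext1 <;> simp [fibRoot, pow_two, fibPoly]
  | succ n ih =>
    rw [show n + 1 + 2 = (n + 2) + 1 by ring, pow_succ, ih]
    ext1 <;> simp [fibRoot, fibPoly]
    ring

theorem stmt_2 (p : ℕ) (hp : p.Prime) (hodd : Odd p)
    (F R : Polynomial (ZMod p))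
    (hF : F = (X ^ 2 + 4) ^ ((p - 1) / 2))
    (hR : R = X ^ p - X * F) :
    R = 2 * fibPoly p (p - 2) := by
  have : Fact p.Prime := ⟨hp⟩
  have hinj : Function.Injective (algebraMap (Polynomial (ZMod p)) (FibAlg p)) := by
    intro a b h
    simpa using congrArg QuadraticAlgebra.re h
  have : CharP (FibAlg p) p := charP_of_injective_algebraMap hinj p
  have hs : (⟨-X, 2⟩ : FibAlg p) ^ 2 = algebraMap (Polynomial (ZMod p)) (FibAlg p) (X ^ 2 + 4) := by
    ext1 <;> simp [pow_two] <;> ring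
  have hsp : (⟨-X, 2⟩ : FibAlg p) ^ p = algebraMap (Polynomial (ZMod p)) (FibAlg p) F * ⟨-X, 2⟩ := by
    obtain ⟨k, rfl⟩ := hodd
    rw [hF, show (2 * k + 1 - 1) / 2 = k by omega, pow_succ, pow_mul, hs, map_pow]
  have hsum : fibRoot p + fibRoot p = ⟨-X, 2⟩ +
      algebraMap (Polynomial (ZMod p)) (FibAlg p) X := by
    ext1 <;> simp [fibRoot]
    norm_num
  have key := congrArg (· ^ p) hsum
  simp only [add_pow_char, hsp, ← map_pow] at key
  obtain ⟨m, rfl⟩ : ∃ m, p = m + 2 := ⟨p - 2, by have := hp.two_le; omega⟩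
  rw [fibRoot_pow] at key
  have hre := congrArg QuadraticAlgebra.re key
  simp [-map_pow] at hre
  rw [hR, Nat.add_sub_cancel]
  linear_combination -hre
end

section
/- Let p be an odd prime, F = (T² + 4)^((p-1)/2) ∈ 𝔽_p[T] and R = T^p − T·F ∈ 𝔽_p[T]. Then R has degree p − 2 (in particular deg R < deg F = p − 1), so that R is the remainder in the Euclidean division of T^p by F; equivalently T^p % F = T^p − T·F. -/
/-!
Write `p = 2m + 1` with `m ≥ 1`. Then `F` is `(X + 4) ^ m` evaluated at `X ^ 2`, so it is monic of
degree `2m`, has no odd-degree terms, and its coefficient at `X ^ (2m - 2)` is `4m`. Hence in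
`X ^ p - X * F` the leading terms cancel, the coefficient at `X ^ (2m)` vanishes, and the coefficient
at `X ^ (2m - 1)` is `-4m = 2 - 2p = 2 ≠ 0` in `ZMod p`. The remainder statement follows from
uniqueness of Euclidean division, since `X ^ p = R + F * X` with `deg R < deg F`.
-/

open Polynomial

/-- The coefficients of `(X ^ 2 + 4) ^ m`, obtained by expanding those of `(X + 4) ^ m`. -/
lemma coeff_sq_add_four_pow {A : Type*} [CommRing A] (m n : ℕ) :
    ((X ^ 2 + 4 : A[X]) ^ m).coeff n =
      if 2 ∣ n then (4 : A) ^ (m - n / 2) * (m.choose (n / 2) : A) else 0 := by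
  have h : (X ^ 2 + 4 : A[X]) ^ m = expand A 2 ((X + C 4) ^ m) := by
    simp only [map_pow, map_add, expand_X, expand_C]
    rfl
  rw [h, coeff_expand two_pos]
  simp only [coeff_X_add_C_pow]

theorem stmt_3 (p : ℕ) [Fact p.Prime] (hodd : Odd p)
    (F R : Polynomial (ZMod p))
    (hF : F = (X ^ 2 + 4) ^ ((p - 1) / 2))
    (hR : R = X ^ p - X * F) :
    R.natDegree = p - 2 ∧ F.natDegree = p - 1 ∧ R.degree < F.degree ∧
      (X ^ p : Polynomial (ZMod p)) % F = X ^ p - X * F := by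
  have hp : p.Prime := Fact.out
  have h2 := hp.two_le
  obtain ⟨m, hm⟩ := hodd
  obtain ⟨k, rfl⟩ : ∃ k, m = k + 1 := ⟨m - 1, by omega⟩
  rw [show (p - 1) / 2 = k + 1 by omega] at hF
  have hcF (n : ℕ) := hF ▸ coeff_sq_add_four_pow (A := ZMod p) (k + 1) n
  have hFd : F.natDegree = p - 1 := by
    apply natDegree_eq_of_le_of_coeff_ne_zero
    · rw [natDegree_le_iff_coeff_eq_zero]
      intro N hN
      rw [hcF]
      split_ifs
      · rw [Nat.choose_eq_zero_of_lt (by omega)]; simp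
      · rfl
    · rw [hcF, if_pos (by omega), show (p - 1) / 2 = k + 1 by omega]
      simp
  have hRd : R.natDegree = p - 2 := by
    apply natDegree_eq_of_le_of_coeff_ne_zero
    · rw [natDegree_le_iff_coeff_eq_zero]
      intro N hN
      obtain ⟨n, rfl⟩ : ∃ n, N = n + 1 := ⟨N - 1, by omega⟩
      rw [hR, coeff_sub, coeff_X_mul, coeff_X_pow, hcF]
      by_cases hn : n + 1 = p
      · rw [if_pos hn, if_pos (by omega), show n / 2 = k + 1 by omega]
        simp
      · rw [if_neg hn]
        split_ifs
        · rw [Nat.choose_eq_zero_of_lt (by omega)]; simp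
        · simp
    · rw [hR, show p - 2 = 2 * k + 1 by omega, coeff_sub, coeff_X_mul, coeff_X_pow, hcF,
        if_neg (by omega), if_pos (by omega), show 2 * k / 2 = k by omega]
      have hp0 : ((2 * (k + 1) + 1 : ℕ) : ZMod p) = 0 := by rw [← hm]; simp
      have htwo : (2 : ZMod p) ≠ 0 := by
        intro h
        have := (ZMod.natCast_eq_zero_iff 2 p).1 (by exact_mod_cast h)
        have := Nat.le_of_dvd two_pos this
        omega
      intro h
      apply htwo
      rw [Nat.choose_succ_self_right, Nat.add_sub_cancel_left] at h
      push_cast at h hp0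
      linear_combination h + 2 * hp0
  have hF0 : F ≠ 0 := by
    rintro rfl
    simp at hFd
    omega
  have hlt : R.degree < F.degree := degree_lt_degree (by omega)
  refine ⟨hRd, hFd, hlt, ?_⟩
  have hX : (X ^ p : (ZMod p)[X]) = R + F * X := by rw [hR]; ring
  rw [← hR, hX, add_mod, mod_eq_self_iff hF0 |>.2 hlt]
  simp
end

section
/- Let p be an odd prime. Define the sequence (d_n)_{n≥1} of natural numbers by d_n = 2p^k − 1 if n = (p^k − 1)/(p − 1) + 2k + 2 for some k ≥ 1, and d_n = 1 otherwise. Then, as a limit superior of real numbers, limsup_{n→∞} d_{n+1}/(Σ_{1 ≤ i ≤ n} d_i) = 2(p − 1)/3. -/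
open Filter

/-!
Write `g k = 1 + p + ⋯ + p ^ (k - 1)`, so the exceptional indices are `g k + 2 k + 2`. The partial
sum of `d` just before the `k`-th exceptional index is exactly `3 g k + 1` (`sum_before`, by
induction on `k`: passing from one exceptional index to the next adds `2 p ^ k - 1` and then
`p ^ k + 1` ones). Since `p ^ k = (p - 1) g k + 1`, the ratio there equals `L - (L - 1) / (3 g k + 1)`
with `L = 2 (p - 1) / 3 ≥ 1`. These ratios are at most `L` and tend to `L`, and at every other index
the ratio is at most `1 ≤ L`; hence the upper limit is `L`.
-/

/-- The repunit `1 + p + ⋯ + p ^ (k - 1)`. -/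
def repunit (p k : ℕ) : ℕ := ∑ i ∈ Finset.range k, p ^ i

lemma repunit_succ (p k : ℕ) : repunit p (k + 1) = repunit p k + p ^ k :=
  Finset.sum_range_succ _ _

lemma le_repunit {p : ℕ} (hp : 0 < p) (k : ℕ) : k ≤ repunit p k := by
  induction k with
  | zero => simp
  | succ k ih => rw [repunit_succ]; have := pow_pos hp k; omega

lemma pow_eq_repunit (p k : ℕ) : (p : ℝ) ^ k = (p - 1) * repunit p k + 1 := by
  induction k with
  | zero => simp [repunit]
  | succ k ih => rw [repunit_succ, pow_succ]; push_cast; linear_combination ih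

lemma strictMono_index (p : ℕ) : StrictMono (fun k => repunit p k + 2 * k + 2) := by
  refine strictMono_nat_of_lt_succ fun k => ?_
  simp only [repunit_succ]
  omega

section

variable {p : ℕ} {d : ℕ → ℕ}

/-- On the block of ones after the `k`-th exceptional index, partial sums grow by one each step. -/
lemma sum_gap
    (hd2 : ∀ n : ℕ, (¬ ∃ k : ℕ, 1 ≤ k ∧ n = repunit p k + 2 * k + 2) → d n = 1)
    (k j : ℕ) (hj : j < p ^ k + 2) :
    ∑ i ∈ Finset.Icc 1 (repunit p k + 2 * k + 2 + j), d i
      = ∑ i ∈ Finset.Icc 1 (repunit p k + 2 * k + 2), d i + j := by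
  induction j with
  | zero => rfl
  | succ j ih =>
    rw [← add_assoc, Finset.sum_Icc_succ_top (by omega), ih (by omega), hd2, add_assoc]
    rintro ⟨m, -, hm⟩
    have h1 : k < m := (strictMono_index p).lt_iff_lt.1 (by omega)
    have h2 : m < k + 1 :=
      (strictMono_index p).lt_iff_lt.1 (by rw [repunit_succ]; omega)
    omega

/-- The sum of all terms strictly before the `k`-th exceptional index. -/
lemma sum_before (hp : 0 < p)
    (hd1 : ∀ k : ℕ, 1 ≤ k → d (repunit p k + 2 * k + 2) = 2 * p ^ k - 1)
    (hd2 : ∀ n : ℕ, (¬ ∃ k : ℕ, 1 ≤ k ∧ n = repunit p k + 2 * k + 2) → d n = 1)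
    (k : ℕ) (hk : 1 ≤ k) :
    ∑ i ∈ Finset.Icc 1 (repunit p k + 2 * k + 1), d i = 3 * repunit p k + 1 := by
  induction k, hk using Nat.le_induction with
  | base =>
    have h1 : repunit p 1 = 1 := by simp [repunit]
    have h : ∀ i ∈ Finset.Icc 1 4, d i = 1 := by
      intro i hi
      apply hd2
      rintro ⟨m, hm, rfl⟩
      have := le_repunit hp m
      have := (Finset.mem_Icc.1 hi).2
      omega
    rw [h1, Finset.sum_congr rfl h]
    simp
  | succ k hk ih =>
    have hpos := pow_pos hp k
    have hg := sum_gap hd2 k (p ^ k + 1) (by omega)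
    rw [show repunit p k + 2 * k + 2 = (repunit p k + 2 * k + 1) + 1 from rfl,
      Finset.sum_Icc_succ_top (by omega) d (b := repunit p k + 2 * k + 1), ih, hd1 k hk] at hg
    rw [repunit_succ, show repunit p k + p ^ k + 2 * (k + 1) + 1
      = repunit p k + 2 * k + 1 + 1 + (p ^ k + 1) by ring, hg]
    omega

end

theorem stmt_10 (p : ℕ) (hp : p.Prime) (hodd : Odd p)
    (d : ℕ → ℕ)
    (hd1 : ∀ k : ℕ, 1 ≤ k → d ((p ^ k - 1) / (p - 1) + 2 * k + 2) = 2 * p ^ k - 1)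
    (hd2 : ∀ n : ℕ, (¬ ∃ k : ℕ, 1 ≤ k ∧ n = (p ^ k - 1) / (p - 1) + 2 * k + 2) → d n = 1) :
    Filter.limsup
        (fun n : ℕ => (d (n + 1) : ℝ) / ((∑ i ∈ Finset.Icc 1 n, d i : ℕ) : ℝ))
        atTop
      = 2 * ((p : ℝ) - 1) / 3 := by
  have hp3 : 3 ≤ p := by
    have := hp.two_le
    obtain ⟨m, rfl⟩ := hodd
    omega
  have hp0 : 0 < p := by omega
  have hrep : ∀ k, (p ^ k - 1) / (p - 1) = repunit p k := fun k =>
    (Nat.geomSum_eq hp.two_le k).symm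
  simp only [hrep] at hd1 hd2
  set u : ℕ → ℝ := fun n => (d (n + 1) : ℝ) / ((∑ i ∈ Finset.Icc 1 n, d i : ℕ) : ℝ) with hu
  set L : ℝ := 2 * ((p : ℝ) - 1) / 3 with hL
  have hL1 : 1 ≤ L := by
    have : (3 : ℝ) ≤ p := by exact_mod_cast hp3
    rw [hL]; linarith
  have hval : ∀ k, 1 ≤ k →
      u (repunit p k + 2 * k + 1) = L - (L - 1) / (3 * repunit p k + 1) := by
    intro k hk
    have hpos := pow_pos hp0 k
    have h3 : (3 * (repunit p k : ℝ) + 1) ≠ 0 := by positivity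
    simp only [hu]
    rw [sum_before hp0 hd1 hd2 k hk, hd1 k hk, Nat.cast_sub (by omega)]
    push_cast
    rw [pow_eq_repunit, hL]
    field_simp
    ring
  have hnonneg : ∀ n, 0 ≤ u n := fun n => by positivity
  have hle : ∀ n, u n ≤ L := by
    intro n
    by_cases h : ∃ k : ℕ, 1 ≤ k ∧ n + 1 = repunit p k + 2 * k + 2
    · obtain ⟨k, hk, hn⟩ := h
      obtain rfl : n = repunit p k + 2 * k + 1 := by omega
      rw [hval k hk]
      have : 0 ≤ (L - 1) / (3 * (repunit p k : ℝ) + 1) :=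
        div_nonneg (by linarith) (by positivity)
      linarith
    · simp only [hu]
      rw [hd2 _ h, Nat.cast_one, one_div]
      -- the inverse of a natural number is at most one, also when the sum is empty
      exact (Nat.cast_inv_le_one _).trans hL1
  have hbdd : IsBoundedUnder (· ≤ ·) atTop u := isBoundedUnder_of ⟨L, hle⟩
  have hcobdd : IsCoboundedUnder (· ≤ ·) atTop u :=
    (isBoundedUnder_of ⟨0, hnonneg⟩ : IsBoundedUnder (· ≥ ·) atTop u).isCoboundedUnder_le
  refine le_antisymm (limsup_le_of_le hcobdd (Eventually.of_forall hle)) ?_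
  refine le_of_forall_pos_sub_le fun ε hε => ?_
  refine le_limsup_of_frequently_le (frequently_atTop.2 fun a => ?_) hbdd
  obtain ⟨b, hb⟩ := exists_nat_gt ((L - 1) / ε)
  refine ⟨repunit p (a + b + 1) + 2 * (a + b + 1) + 1, ?_, ?_⟩
  · omega
  · rw [hval _ (by omega)]
    have h1 : (b : ℝ) ≤ repunit p (a + b + 1) := by
      have := le_repunit hp0 (a + b + 1)
      exact_mod_cast (show b ≤ repunit p (a + b + 1) by omega)
    have h2 : (L - 1) / (3 * (repunit p (a + b + 1) : ℝ) + 1) ≤ ε := by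
      rw [div_le_iff₀ (by positivity)]
      rw [div_lt_iff₀ hε] at hb
      have h0 : (0 : ℝ) ≤ b := b.cast_nonneg
      nlinarith
    linarith
end

section
/- Let p be an odd prime, let K = 𝔽_p((1/T)) be the field of formal Laurent series in 1/T over 𝔽_p (the Laurent series field 𝔽_p((X)) with T = X⁻¹, with its valuation topology), and let φ : 𝔽_p[T] → K be the evaluation map T ↦ X⁻¹. Let (f_n) be the Fibonacci polynomials in 𝔽_p[T]. Then the sequence n ↦ φ(f_n)/φ(f_{n−1}) converges in K, and its limit ω satisfies ω² = T·ω + 1. -/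
/-! Write `T` for `Tvar p`, `F n` for the image of the `n`-th Fibonacci polynomial and
`r n = F (n + 1) / F n`. The recurrence gives `r (n + 1) * r n = T * r n + 1`, so any limit `ω`
of `r` satisfies `ω ^ 2 = T * ω + 1`, and it remains to show that `r` converges.

Since `v T > 1`, the term `T * F (n + 1)` dominates in the recurrence, whence `v (F n) = v T ^ n`
(`valuation_fib`); in particular `F n ≠ 0`. Cassini's identity
`F (n + 2) * F n - F (n + 1) ^ 2 = (-1) ^ n` then gives `v (r (n + 1) - r n) ≤ v (X ^ n)`.
By the ultrametric inequality `v (r m - r n) ≤ v (X ^ n)` for all `m ≥ n`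
(`valuation_ratio_sub_le`), so `r` is Cauchy, and `𝔽_p((X))` is complete. -/

open Polynomial Filter

/-- The element `T = X⁻¹` of the Laurent series field `𝔽_p((X)) = 𝔽_p((1/T))`. -/
noncomputable def Tvar (p : ℕ) [Fact p.Prime] : LaurentSeries (ZMod p) :=
  (↑(PowerSeries.X : PowerSeries (ZMod p)) : LaurentSeries (ZMod p))⁻¹

/-- The evaluation map `𝔽_p[T] → 𝔽_p((1/T))`, `T ↦ X⁻¹`. -/
noncomputable def evalT (p : ℕ) [Fact p.Prime] :
    Polynomial (ZMod p) →+* LaurentSeries (ZMod p) :=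
  (Polynomial.aeval (Tvar p)).toRingHom

section

variable (p : ℕ) [Fact p.Prime]

/-- The variable `X = 1/T` of `𝔽_p((X))`. -/
noncomputable abbrev Xvar : LaurentSeries (ZMod p) :=
  (↑(PowerSeries.X : PowerSeries (ZMod p)) : LaurentSeries (ZMod p))

/-- The image of the `n`-th Fibonacci polynomial in `𝔽_p((1/T))`. -/
noncomputable abbrev fibL (n : ℕ) : LaurentSeries (ZMod p) := evalT p (fibPoly p n)

lemma valuation_X : Valued.v (Xvar p) = WithZero.exp (-1 : ℤ) := by
  simpa using LaurentSeries.valuation_X_pow (ZMod p) 1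

lemma valuation_X_lt_one : Valued.v (Xvar p) < 1 := by
  rw [valuation_X, ← WithZero.exp_zero, WithZero.exp_lt_exp]
  norm_num

lemma one_lt_valuation_T : 1 < Valued.v (Tvar p) := by
  rw [Tvar, map_inv₀, valuation_X, ← WithZero.exp_neg, ← WithZero.exp_zero, WithZero.exp_lt_exp]
  norm_num

lemma evalT_X : evalT p Polynomial.X = Tvar p := by
  simp [evalT]

lemma fibL_zero : fibL p 0 = 1 := by simp [fibL, fibPoly]

lemma fibL_one : fibL p 1 = Tvar p := by simp [fibL, fibPoly, evalT_X]

lemma fibL_add_two (n : ℕ) : fibL p (n + 2) = Tvar p * fibL p (n + 1) + fibL p n := by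
  simp [fibL, fibPoly, evalT_X]

lemma valuation_fib (n : ℕ) : Valued.v (fibL p n) = Valued.v (Tvar p) ^ n := by
  have hT := one_lt_valuation_T p
  induction n using Nat.twoStepInduction with
  | zero => simp [fibL_zero]
  | one => simp [fibL_one]
  | more n ih₀ ih₁ =>
    have hlt : Valued.v (fibL p n) < Valued.v (Tvar p * fibL p (n + 1)) := by
      rw [map_mul, ih₀, ih₁, ← pow_succ']
      exact pow_lt_pow_right₀ hT (by omega)
    rw [fibL_add_two, Valuation.map_add_eq_of_lt_left _ hlt, map_mul, ih₁, ← pow_succ']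

lemma fibL_ne_zero (n : ℕ) : fibL p n ≠ 0 := by
  rw [← Valuation.ne_zero_iff (Valued.v (R := LaurentSeries (ZMod p))), valuation_fib]
  exact pow_ne_zero _ (zero_lt_one.trans (one_lt_valuation_T p)).ne'

/-- Cassini's identity for Fibonacci polynomials. -/
lemma cassini (n : ℕ) : fibL p (n + 2) * fibL p n - fibL p (n + 1) ^ 2 = (-1) ^ n := by
  induction n with
  | zero => rw [fibL_add_two, fibL_zero, fibL_one]; ring
  | succ n ih =>
    rw [pow_succ (-1), ← ih, fibL_add_two p (n + 1), fibL_add_two p n]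
    ring

lemma valuation_ratio_succ_sub_le (n : ℕ) :
    Valued.v (fibL p (n + 2) / fibL p (n + 1) - fibL p (n + 1) / fibL p n) ≤
      Valued.v (Xvar p ^ n) := by
  have h : fibL p (n + 2) / fibL p (n + 1) - fibL p (n + 1) / fibL p n =
      (-1) ^ n / (fibL p (n + 1) * fibL p n) := by
    rw [← cassini, div_sub_div _ _ (fibL_ne_zero p _) (fibL_ne_zero p _)]
    ring
  have hX : Xvar p = (Tvar p)⁻¹ := by simp [Tvar]
  rw [h, hX, map_div₀, map_mul, valuation_fib, valuation_fib, map_pow, map_pow, Valuation.map_neg,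
    map_one, one_pow, map_inv₀, inv_pow, one_div, ← pow_add]
  have hT := one_lt_valuation_T p
  exact inv_anti₀ (pow_pos (zero_lt_one.trans hT) _) (pow_le_pow_right₀ hT.le (by omega))

lemma valuation_ratio_sub_le {n m : ℕ} (hnm : n ≤ m) :
    Valued.v (fibL p (m + 1) / fibL p m - fibL p (n + 1) / fibL p n) ≤
      Valued.v (Xvar p ^ n) := by
  induction m, hnm using Nat.le_induction with
  | base => simp
  | succ m hnm ih =>
    rw [← sub_add_sub_cancel _ (fibL p (m + 1) / fibL p m)]
    refine Valuation.map_add_le _ ((valuation_ratio_succ_sub_le p m).trans ?_) ih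
    rw [map_pow, map_pow]
    exact pow_le_pow_right_of_le_one' (valuation_X_lt_one p).le hnm

lemma cauchySeq_ratio : CauchySeq (fun n : ℕ => fibL p (n + 1) / fibL p n) := by
  rw [(Valued.hasBasis_uniformity (LaurentSeries (ZMod p)) _).cauchySeq_iff']
  intro γ _
  have hX := Valued.tendsto_zero_pow_of_v_lt_one (valuation_X_lt_one p)
  obtain ⟨N, hN⟩ := (((Valued.hasBasis_nhds_zero (LaurentSeries (ZMod p)) _).tendsto_right_iff.1
    hX) γ trivial).exists
  refine ⟨N, fun m hm => ?_⟩
  -- The basic entourages are written in terms of `y - x`, the estimate in terms of `x - y`.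
  rw [Set.mem_ofPred_eq, ← neg_sub, Valuation.map_neg]
  exact (Valuation.restrict_le_iff _ |>.2 (valuation_ratio_sub_le p hm)).trans_lt hN

end

theorem stmt_12 (p : ℕ) [Fact p.Prime] (hodd : Odd p) :
    ∃ ω : LaurentSeries (ZMod p),
      Tendsto (fun n : ℕ => evalT p (fibPoly p (n + 1)) / evalT p (fibPoly p n))
        atTop (nhds ω) ∧
      ω ^ 2 = Tvar p * ω + 1 := by
  obtain ⟨ω, hω⟩ := cauchySeq_tendsto_of_complete (cauchySeq_ratio p)
  refine ⟨ω, hω, ?_⟩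
  have hrec (n : ℕ) : fibL p (n + 2) / fibL p (n + 1) * (fibL p (n + 1) / fibL p n) =
      Tvar p * (fibL p (n + 1) / fibL p n) + 1 := by
    have h₀ := fibL_ne_zero p n
    have h₁ := fibL_ne_zero p (n + 1)
    rw [div_mul_div_cancel₀ h₁, fibL_add_two, add_div, div_self h₀, mul_div_assoc]
  have hl := ((tendsto_add_atTop_iff_nat 1).2 hω).mul hω
  rw [sq]
  refine tendsto_nhds_unique hl ?_
  refine ((hω.const_mul (Tvar p)).add_const 1).congr fun n => ?_
  exact (hrec n).symm
end

section
/- Let p be an odd prime, (u₁,u₂,u₃) a triple of nonzero elements of 𝔽_p, and set x₂ = u₁u₂T²+1, y₂ = u₂T, x₃ = u₁u₂u₃T³+(u₁+u₃)T, y₃ = u₂u₃T²+1, F = (T²+4)^((p-1)/2), R = T^p − T·F in 𝔽_p[T]. Let K = 𝔽_p((1/T)) be the field of formal Laurent series in 1/T (with T = X⁻¹ in 𝔽_p((X))) and φ : 𝔽_p[T] → K the map T ↦ X⁻¹. Then there exists α ∈ K with φ(y₃)·α^{p+1} − φ(x₃)·α^p + (4u₁u₃·φ(y₂)·φ(F)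 − u₁·φ(y₃)·φ(R))·α + u₁·φ(x₃)·φ(R) − 4u₁u₃·φ(x₂)·φ(F) = 0, and such that α − u₁·T has positive valuation in 1/T (i.e., the continued fraction expansion of α begins with the partial quotient u₁T). -/
/-!
Write `α = u₁T + β`. Since `y₃·u₁T - x₃ = -u₃T`, `y₂·u₁T - x₂ = -1` and `α^p = u₁T^p + β^p`, the
equation `(α^p - u₁R)(y₃α - x₃) + 4u₁u₃F(y₂α - x₂) = 0` becomes
`(u₁TF + β^p)(y₃β - u₃T) + 4u₁u₃F(u₂Tβ - 1) = 0`. With `X = 1/T`, `β = Xδ` and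
`f = (1 + 4X²)^((p-1)/2) = X^(p-1) F`, multiplying by `X^(p+1)` turns it into an equation over the
power series ring,
`(u₁f + X^(2p)δ^p)((u₂u₃ + X²)δ - u₃) + 4u₁u₃fX²(u₂δ - 1) = 0`.
Modulo `X` it reads `u₁u₃(u₂δ - 1) = 0`, with the simple root `1/u₂`. Hensel's lemma does not
apply to it directly, being stated for monic polynomials: its leading coefficient in `δ`
is not a unit, whereas its constant coefficient is the unit
`-u₁u₃f(1 + 4X²)`. Hence Hensel's lemma is applied, after division by this unit, to the
equation for `γ = 1/δ`, which is monic; this is `exists_series`. The return to Laurent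
series is `laurent_identity`.
-/

open Polynomial

/-- Hensel's lemma over `k⟦X⟧` for a monic polynomial `Y^(n+1) + AY^n + BY + D` whose reduction
modulo `X` is `Y^n(Y - a)` with `a ≠ 0`. -/
lemma hensel_monic {k : Type*} [Field k] (n : ℕ) (hn : 2 ≤ n) (A B D : PowerSeries k) (a : k)
    (ha : a ≠ 0) (hA : PowerSeries.constantCoeff A = -a) (hB : PowerSeries.constantCoeff B = 0)
    (hD : PowerSeries.constantCoeff D = 0) :
    ∃ γ : PowerSeries k, PowerSeries.constantCoeff γ = a ∧
      γ ^ (n + 1) + A * γ ^ n + B * γ + D = 0 := by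
  let I : Ideal (PowerSeries k) := Ideal.span {PowerSeries.X}
  let P : Polynomial (PowerSeries k) := X ^ (n + 1) + (C A * X ^ n + C B * X + C D)
  have hP : P.Monic := by
    apply monic_X_pow_add
    have h1 : (C A * X ^ n : Polynomial (PowerSeries k)).degree ≤ n := degree_C_mul_X_pow_le n A
    have h2 : (C B * X : Polynomial (PowerSeries k)).degree ≤ n :=
      (degree_C_mul_X_le B).trans (by exact_mod_cast (by omega : 1 ≤ n))
    have h3 : (C D : Polynomial (PowerSeries k)).degree ≤ n :=
      degree_C_le.trans (by exact_mod_cast Nat.zero_le n)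
    refine lt_of_le_of_lt (degree_add_le_of_degree_le (degree_add_le_of_degree_le h1 h2) h3) ?_
    exact_mod_cast Nat.lt_succ_self n
  have h0 : P.eval (PowerSeries.C a) ∈ I := by
    rw [Ideal.mem_span_singleton, PowerSeries.X_dvd_iff]
    simp [P, hA, hB, hD]
    ring
  have h1 : IsUnit (Ideal.Quotient.mk I (P.derivative.eval (PowerSeries.C a))) := by
    apply IsUnit.map
    rw [PowerSeries.isUnit_iff_constantCoeff]
    obtain ⟨m, rfl⟩ : ∃ m, n = m + 1 := ⟨n - 1, by omega⟩
    have : PowerSeries.constantCoeff (P.derivative.eval (PowerSeries.C a)) = a ^ (m + 1) := by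
      simp [P, hA, hB]
      ring
    rw [this]
    exact (pow_ne_zero _ ha).isUnit
  obtain ⟨γ, hγ, hγ'⟩ := HenselianRing.is_henselian (I := I) P hP (PowerSeries.C a) h0 h1
  refine ⟨γ, ?_, ?_⟩
  · rw [Ideal.mem_span_singleton, PowerSeries.X_dvd_iff] at hγ'
    simpa [sub_eq_zero] using hγ'
  · have : P.eval γ = 0 := hγ
    simpa [P, add_assoc] using this

/-- A power series solution `δ` of the rescaled equation. The factor `f` may be any series with
constant coefficient `1`. -/
lemma exists_series {k : Type*} [Field k] (n : ℕ) (hn : 2 ≤ n) (u₁ u₂ u₃ : k)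
    (hu₁ : u₁ ≠ 0) (hu₂ : u₂ ≠ 0) (hu₃ : u₃ ≠ 0)
    (f : PowerSeries k) (hf : PowerSeries.constantCoeff f = 1) :
    ∃ δ : PowerSeries k, δ ≠ 0 ∧
      (PowerSeries.C u₁ * f + PowerSeries.X ^ (2 * n) * δ ^ n) *
          ((PowerSeries.C (u₂ * u₃) + PowerSeries.X ^ 2) * δ - PowerSeries.C u₃)
        + 4 * PowerSeries.C (u₁ * u₃) * f * PowerSeries.X ^ 2 * (PowerSeries.C u₂ * δ - 1)
        = 0 := by
  -- `e` is the leading coefficient of the reciprocal equation, and `w` its inverse.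
  set e : PowerSeries k :=
    -(PowerSeries.C (u₁ * u₃) * f * (1 + 4 * PowerSeries.X ^ 2)) with he
  have hce : PowerSeries.constantCoeff e = -(u₁ * u₃) := by simp [he, hf]
  have hne : PowerSeries.constantCoeff e ≠ 0 := by
    rw [hce]; exact neg_ne_zero.mpr (mul_ne_zero hu₁ hu₃)
  set w : PowerSeries k := e⁻¹ with hw
  have hew : e * w = 1 := PowerSeries.mul_inv_cancel e hne
  have hcw : PowerSeries.constantCoeff w = -(u₁ * u₃)⁻¹ := by
    rw [hw, PowerSeries.constantCoeff_inv, hce, inv_neg]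
  have hn0 : 2 * n ≠ 0 := by omega
  obtain ⟨γ, hγ, h⟩ := hensel_monic n hn
    (w * (PowerSeries.C u₁ * f * (PowerSeries.C (u₂ * u₃) + PowerSeries.X ^ 2)
      + 4 * PowerSeries.C (u₁ * u₃) * f * PowerSeries.X ^ 2 * PowerSeries.C u₂))
    (-(w * PowerSeries.C u₃ * PowerSeries.X ^ (2 * n)))
    (w * PowerSeries.X ^ (2 * n) * (PowerSeries.C (u₂ * u₃) + PowerSeries.X ^ 2)) u₂ hu₂
    (by simp [hcw, hf]; field_simp) (by simp [hn0]) (by simp [hn0])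
  have hγ0 : PowerSeries.constantCoeff γ ≠ 0 := by rwa [hγ]
  have hγδ : γ * γ⁻¹ = 1 := PowerSeries.mul_inv_cancel γ hγ0
  refine ⟨γ⁻¹, right_ne_zero_of_mul_eq_one hγδ, ?_⟩
  set δ := γ⁻¹
  have hpow : γ ^ n * δ ^ n = 1 := by rw [← mul_pow, hγδ, one_pow]
  have key : e * γ ^ (n + 1)
      + (PowerSeries.C u₁ * f * (PowerSeries.C (u₂ * u₃) + PowerSeries.X ^ 2)
        + 4 * PowerSeries.C (u₁ * u₃) * f * PowerSeries.X ^ 2 * PowerSeries.C u₂) * γ ^ n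
      - PowerSeries.C u₃ * PowerSeries.X ^ (2 * n) * γ
      + PowerSeries.X ^ (2 * n) * (PowerSeries.C (u₂ * u₃) + PowerSeries.X ^ 2) = 0 := by
    linear_combination e * h - ((PowerSeries.C u₁ * f * (PowerSeries.C (u₂ * u₃) + PowerSeries.X ^ 2)
        + 4 * PowerSeries.C (u₁ * u₃) * f * PowerSeries.X ^ 2 * PowerSeries.C u₂) * γ ^ n
      - PowerSeries.C u₃ * PowerSeries.X ^ (2 * n) * γ
      + PowerSeries.X ^ (2 * n) * (PowerSeries.C (u₂ * u₃) + PowerSeries.X ^ 2)) * hew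
  have hreg : γ ^ (n + 1) ≠ 0 := pow_ne_zero _ (left_ne_zero_of_mul_eq_one hγδ)
  apply (mul_eq_zero.mp _).resolve_left hreg
  rw [← key, he]
  simp only [map_mul]
  generalize (PowerSeries.X : PowerSeries k) ^ (2 * n) = Z
  rw [pow_succ]
  generalize γ ^ n = G at *
  generalize δ ^ n = E at *
  set a := PowerSeries.C u₁
  set b := PowerSeries.C u₂
  set c := PowerSeries.C u₃
  set x := (PowerSeries.X : PowerSeries k) ^ 2
  linear_combination (G * (a * f * (b * c + x) + 4 * (a * c) * f * x * b)
    + G * E * Z * (b * c + x)) * hγδ + Z * ((b * c + x) - c * γ) * hpow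

/-- The passage from the rescaled equation, with `s = 1/T`, `t = T` and `α = u₁t + sδ`, to the
original one. -/
lemma laurent_identity {L : Type*} [Field L] (p m : ℕ) [CharP L p] [Fact p.Prime]
    (hp : p = 2 * m + 1) (a b c s t δ : L) (hst : s * t = 1) (ha : a ^ p = a)
    (h : (a * (1 + 4 * s ^ 2) ^ m + s ^ (2 * p) * δ ^ p) * ((b * c + s ^ 2) * δ - c)
      + 4 * (a * c) * (1 + 4 * s ^ 2) ^ m * s ^ 2 * (b * δ - 1) = 0) :
    (b * c * t ^ 2 + 1) * (a * t + s * δ) ^ (p + 1)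
        - (a * b * c * t ^ 3 + (a + c) * t) * (a * t + s * δ) ^ p
        + (4 * a * c * (b * t) * (t ^ 2 + 4) ^ m
          - a * (b * c * t ^ 2 + 1) * (t ^ p - t * (t ^ 2 + 4) ^ m)) * (a * t + s * δ)
        + a * (a * b * c * t ^ 3 + (a + c) * t) * (t ^ p - t * (t ^ 2 + 4) ^ m)
        - 4 * a * c * (a * b * t ^ 2 + 1) * (t ^ 2 + 4) ^ m = 0 := by
  have hs : s ≠ 0 := left_ne_zero_of_mul_eq_one hst
  have hF : s ^ (2 * m) * (t ^ 2 + 4) ^ m = (1 + 4 * s ^ 2) ^ m := by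
    rw [pow_mul, ← mul_pow]
    congr 1
    linear_combination (s * t + 1) * hst
  have hα : (a * t + s * δ) ^ p = a * t ^ p + s ^ p * δ ^ p := by
    rw [add_pow_char, mul_pow, mul_pow, ha]
  set F := (t ^ 2 + 4) ^ m
  set f := (1 + 4 * s ^ 2) ^ m
  -- The factors of the equation, rescaled by powers of `s` to be integral in `s` and `δ`.
  have h1 : s ^ p * (a * t * F + s ^ p * δ ^ p) = a * f + s ^ (2 * p) * δ ^ p := by
    have e1 : s ^ p = s ^ (2 * m) * s := by rw [hp, pow_succ]
    have e2 : s ^ (2 * p) = s ^ p * s ^ p := by rw [two_mul, pow_add]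
    rw [e2, mul_add]
    congr 1
    · rw [e1]
      linear_combination a * s ^ (2 * m) * F * hst + a * hF
    · ring
  have h2 : s * ((b * c * t ^ 2 + 1) * (a * t + s * δ) - (a * b * c * t ^ 3 + (a + c) * t))
      = (b * c + s ^ 2) * δ - c := by
    linear_combination (b * c * δ * (s * t + 1) - c) * hst
  have h3 : b * t * (a * t + s * δ) - (a * b * t ^ 2 + 1) = b * δ - 1 := by
    linear_combination b * δ * hst
  have h4 : s ^ (p + 1) * F = s ^ 2 * f := by
    rw [← hF, hp]; ring
  have hmain : s ^ (p + 1) * ((a * t * F + s ^ p * δ ^ p) *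
      ((b * c * t ^ 2 + 1) * (a * t + s * δ) - (a * b * c * t ^ 3 + (a + c) * t))
      + 4 * (a * c) * F * (b * t * (a * t + s * δ) - (a * b * t ^ 2 + 1))) = 0 := by
    rw [← h, ← h1, ← h2, h3]
    linear_combination 4 * (a * c) * (b * δ - 1) * h4
  have hz := (mul_eq_zero.mp hmain).resolve_left (pow_ne_zero _ hs)
  rw [pow_succ (a * t + s * δ), hα]
  linear_combination hz

lemma order_pos_of_X_mul {k : Type*} [Field k] (δ : PowerSeries k) (hδ : δ ≠ 0) :
    0 < (HahnSeries.ofPowerSeries ℤ k PowerSeries.X * HahnSeries.ofPowerSeries ℤ k δ).order := by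
  rw [← map_mul]
  set g := PowerSeries.X * δ with hg
  have hne : HahnSeries.ofPowerSeries ℤ k g ≠ 0 := by
    rw [Ne, map_eq_zero_iff _ HahnSeries.ofPowerSeries_injective]
    exact mul_ne_zero PowerSeries.X_ne_zero hδ
  by_contra! hle
  apply HahnSeries.coeff_order_eq_zero.not.mpr hne
  rw [PowerSeries.coeff_coe]
  split_ifs with h
  · rfl
  · have : (HahnSeries.ofPowerSeries ℤ k g).order = 0 := by omega
    rw [this, hg]
    simp

theorem stmt_13 (p : ℕ) [Fact p.Prime] (hodd : Odd p)
    (u₁ u₂ u₃ : ZMod p) (hu₁ : u₁ ≠ 0) (hu₂ : u₂ ≠ 0) (hu₃ : u₃ ≠ 0)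
    (x₂ y₂ x₃ y₃ F R : Polynomial (ZMod p))
    (hx₂ : x₂ = C (u₁ * u₂) * X ^ 2 + 1)
    (hy₂ : y₂ = C u₂ * X)
    (hx₃ : x₃ = C (u₁ * u₂ * u₃) * X ^ 3 + C (u₁ + u₃) * X)
    (hy₃ : y₃ = C (u₂ * u₃) * X ^ 2 + 1)
    (hF : F = (X ^ 2 + 4) ^ ((p - 1) / 2))
    (hR : R = X ^ p - X * F) :
    ∃ α : LaurentSeries (ZMod p),
      evalT p y₃ * α ^ (p + 1) - evalT p x₃ * α ^ p
          + (evalT p (C (4 * u₁ * u₃)) * evalT p y₂ * evalT p F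
              - evalT p (C u₁) * evalT p y₃ * evalT p R) * α
          + evalT p (C u₁) * evalT p x₃ * evalT p R
          - evalT p (C (4 * u₁ * u₃)) * evalT p x₂ * evalT p F = 0 ∧
      0 < (α - evalT p (C u₁ * X)).order := by
  obtain ⟨m, hm⟩ := hodd
  have hp2 : 2 ≤ p := (Fact.out : p.Prime).two_le
  obtain ⟨δ, hδ, h⟩ := exists_series p hp2 u₁ u₂ u₃ hu₁ hu₂ hu₃
    ((1 + 4 * PowerSeries.X ^ 2) ^ m) (by simp)
  have hC : ∀ c : ZMod p, evalT p (C c) = HahnSeries.ofPowerSeries ℤ (ZMod p) (PowerSeries.C c) := by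
    intro c
    simp only [evalT, AlgHom.toRingHom_eq_coe, RingHom.coe_coe, aeval_C]
    rfl
  have hX : evalT p X = Tvar p := by simp [evalT]
  set s : LaurentSeries (ZMod p) := HahnSeries.ofPowerSeries ℤ (ZMod p) PowerSeries.X with hs
  have hs0 : s ≠ 0 := by
    rw [hs, Ne, map_eq_zero_iff _ HahnSeries.ofPowerSeries_injective]
    exact PowerSeries.X_ne_zero
  have hst : s * Tvar p = 1 := mul_inv_cancel₀ hs0
  have : CharP (LaurentSeries (ZMod p)) p := charP_of_injective_algebraMap
    (algebraMap (ZMod p) (LaurentSeries (ZMod p))).injective p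
  have hm' : (p - 1) / 2 = m := by omega
  have h' := congrArg (HahnSeries.ofPowerSeries ℤ (ZMod p)) h
  simp only [map_add, map_mul, map_sub, map_pow, map_one, map_zero, map_ofNat, ← hC, ← hs] at h'
  have ha : evalT p (C u₁) ^ p = evalT p (C u₁) := by
    rw [← map_pow, ← map_pow, ZMod.pow_card]
  have key := laurent_identity p m hm (evalT p (C u₁)) (evalT p (C u₂)) (evalT p (C u₃)) s
    (Tvar p) (HahnSeries.ofPowerSeries ℤ (ZMod p) δ) hst ha h'
  refine ⟨evalT p (C u₁) * Tvar p + s * HahnSeries.ofPowerSeries ℤ (ZMod p) δ, ?_, ?_⟩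
  · subst hx₂ hy₂ hx₃ hy₃ hF hR
    rw [hm']
    simp only [map_add, map_mul, map_sub, map_pow, map_one, map_ofNat, hX]
    exact key
  · rw [map_mul, hX, add_sub_cancel_left]
    exact order_pos_of_X_mul δ hδ
end

section
/- Let p = 3 and let u₁, u₂, u₃ be nonzero elements of 𝔽_3. Set x₂ = u₁u₂T²+1, y₂ = u₂T, x₃ = u₁u₂u₃T³+(u₁+u₃)T, y₃ = u₂u₃T²+1, F = T²+4 = T²+1, R = T³ − T·F in 𝔽_3[T]. Then the degree-4 polynomial y₃·X⁴ − x₃·X³ + (4u₁u₃·y₂·F − u₁·y₃·R)·X + u₁·x₃·R − 4u₁u₃·x₂·F, regarded as a polynomial in X with coefficients in the rational function field 𝔽_3(T), is irreducible over 𝔽_3(T). -/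
/-!
Reduction to finite fields. The quartic is `f = y₃ X⁴ - x₃ X³ + …` with coefficients in `𝔽₃[T]`,
and it is primitive because `y₃ - u₂ T (x₃ - u₁ T y₃) = 1` (the determinant identity for the
convergents). By Gauss's lemma it suffices that `f` be irreducible over `𝔽₃[T]`, and for that it
suffices to find a homomorphism `φ : 𝔽₃[T] → k` to a field which does not kill the leading
coefficient `y₃` and for which `φ(f)` is irreducible over `k`
(`irreducible_of_irreducible_map_of_isPrimitive`).

Two specializations of `T` cover all signs: if `u₂ = u₃ ≠ u₁` then `T = 1` with `k = 𝔽₃` works;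
in all other cases `T = ω` with `ω² = 1 - ω` and `k = 𝔽₉` works. Over `k` the specialized quartic
has no root and no monic quadratic divisor, as a finite check shows
(`irreducible_quartic_of_not_dvd`, `no_factor_F3`, `no_factor_F9`).
-/

open Polynomial

/-- A quartic without quadratic term over a field is irreducible as soon as it has no root and
no monic quadratic divisor `X² + p X + q`. The coefficients `r = b - p a` and `s = -q a - p r` of the
cofactor `a X² + r X + s` are forced by the three top coefficients, and the remaining two
coefficients must fail to match. -/
lemma irreducible_quartic_of_not_dvd {k : Type*} [Field k] (a b d e : k) (ha : a ≠ 0)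
    (hroot : ∀ x : k, a * x ^ 4 + b * x ^ 3 + d * x + e ≠ 0)
    (hquad : ∀ p q : k, ¬ (p * (-(q * a) - p * (b - p * a)) + q * (b - p * a) = d ∧
      q * (-(q * a) - p * (b - p * a)) = e)) :
    Irreducible (C a * X ^ 4 + C b * X ^ 3 + C d * X + C e : k[X]) := by
  set f : k[X] := C a * X ^ 4 + C b * X ^ 3 + C d * X + C e with hf
  have hdeg : f.natDegree = 4 := by rw [hf]; compute_degree!
  have hf0 : f ≠ 0 := by
    intro h
    simp [h] at hdeg
  have hfu : ¬ IsUnit f := fun h => by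
    have := natDegree_eq_zero_of_isUnit h
    omega
  rw [irreducible_iff_lt_natDegree_lt hf0 hfu, hdeg]
  rintro g hg hgd ⟨h, hgh⟩
  have hgd' : g.natDegree = 1 ∨ g.natDegree = 2 := by
    rw [Finset.mem_Ioc] at hgd
    omega
  rcases hgd' with h1 | h2
  · apply hroot (-g.coeff 0)
    have hev := congrArg (eval (-g.coeff 0)) hgh
    rw [eval_mul, hg.eq_X_add_C h1] at hev
    simpa [hf] using hev
  · have hh0 : h ≠ 0 := by
      rintro rfl
      exact hf0 (by simpa using hgh)
    have hhd : h.natDegree = 2 := by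
      have := natDegree_mul hg.ne_zero hh0
      rw [← hgh] at this
      omega
    have g2 : g.coeff 2 = 1 := by rw [← h2]; exact hg
    have g3 : g.coeff 3 = 0 := coeff_eq_zero_of_natDegree_lt (by omega)
    have g4 : g.coeff 4 = 0 := coeff_eq_zero_of_natDegree_lt (by omega)
    have h3 : h.coeff 3 = 0 := coeff_eq_zero_of_natDegree_lt (by omega)
    have h4 : h.coeff 4 = 0 := coeff_eq_zero_of_natDegree_lt (by omega)
    have c0 := congrArg (fun P => coeff P 0) hgh
    have c1 := congrArg (fun P => coeff P 1) hgh
    have c2 := congrArg (fun P => coeff P 2) hgh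
    have c3 := congrArg (fun P => coeff P 3) hgh
    have c4 := congrArg (fun P => coeff P 4) hgh
    simp [hf, coeff_mul, Finset.Nat.antidiagonal_succ, coeff_X, coeff_C, coeff_X_pow,
      g2, g3, g4, h3, h4] at c0 c1 c2 c3 c4
    apply hquad (g.coeff 1) (g.coeff 0)
    have r : h.coeff 1 = b - g.coeff 1 * a := by rw [c4]; linear_combination -c3
    have s : h.coeff 0 = -(g.coeff 0 * a) - g.coeff 1 * (b - g.coeff 1 * a) := by
      rw [← r, c4]
      linear_combination -c2
    rw [← s, ← r]
    exact ⟨by linear_combination -c1, c0.symm⟩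

/-- A primitive polynomial is irreducible if its image under a homomorphism to a field that does
not kill the leading coefficient is irreducible. -/
lemma irreducible_of_irreducible_map_of_isPrimitive {R k : Type*} [CommRing R] [IsDomain R]
    [Field k] (φ : R →+* k) (f : R[X]) (hf : f.IsPrimitive) (hlc : φ f.leadingCoeff ≠ 0)
    (hirr : Irreducible (f.map φ)) : Irreducible f := by
  refine ⟨fun h => hirr.not_isUnit (h.map (mapRingHom φ)), fun g h hgh => ?_⟩
  -- A factor of `f` keeps its degree under `φ`; if its image is a unit then it is constant,
  -- hence a unit by primitivity.
  have key : ∀ g h : R[X], f = g * h → IsUnit (g.map φ) → IsUnit g := by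
    intro g h hgh hu
    have hg : φ g.leadingCoeff ≠ 0 := by
      intro h0
      apply hlc
      rw [hgh, leadingCoeff_mul, map_mul, h0, zero_mul]
    have hd : g.natDegree = 0 := by
      rw [← natDegree_map_of_leadingCoeff_ne_zero φ hg]
      exact natDegree_eq_zero_of_isUnit hu
    rw [eq_C_of_natDegree_eq_zero hd] at hgh ⊢
    exact isUnit_C.2 (hf _ ⟨h, hgh⟩)
  rcases hirr.isUnit_or_isUnit (show f.map φ = g.map φ * h.map φ by rw [hgh, Polynomial.map_mul])
    with hu | hu
  · exact .inl (key g h hgh hu)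
  · exact .inr (key h g (by rw [hgh, mul_comm]) hu)

/-- `𝔽₉ = 𝔽₃(ω)` with `ω² = 1 - ω`. -/
abbrev F9 : Type := QuadraticAlgebra (ZMod 3) 1 (-1)

instance F9.fact : Fact (∀ r : ZMod 3, r ^ 2 ≠ 1 + (-1) * r) := ⟨by decide⟩

instance F9.fintype : Fintype F9 := Fintype.ofEquiv _ (QuadraticAlgebra.equivProd 1 (-1)).symm

/-- The quartic `a X⁴ + b X³ + d X + e` has degree 4 and neither a root nor a monic quadratic
divisor, in the form used by `irreducible_quartic_of_not_dvd`. -/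
def NoFactor {k : Type*} [CommRing k] (a b d e : k) : Prop :=
  a ≠ 0 ∧ (∀ x : k, a * x ^ 4 + b * x ^ 3 + d * x + e ≠ 0) ∧
    ∀ p q : k, ¬ (p * (-(q * a) - p * (b - p * a)) + q * (b - p * a) = d ∧
      q * (-(q * a) - p * (b - p * a)) = e)

instance {k : Type*} [CommRing k] [Fintype k] [DecidableEq k] (a b d e : k) :
    Decidable (NoFactor a b d e) := by
  unfold NoFactor
  infer_instance

/-- Leading coefficient `y₃` of the quartic at `T = t`, where `i` maps `𝔽₃` to the ring of `t`. -/
def cA {k : Type*} [CommRing k] (i : ZMod 3 → k) (t : k) (u₂ u₃ : ZMod 3) : k :=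
  i (u₂ * u₃) * t ^ 2 + 1

/-- Coefficient `-x₃` of `X³` at `T = t`. -/
def cB {k : Type*} [CommRing k] (i : ZMod 3 → k) (t : k) (u₁ u₂ u₃ : ZMod 3) : k :=
  -(i (u₁ * u₂ * u₃) * t ^ 3 + i (u₁ + u₃) * t)

/-- Coefficient of `X` at `T = t`. -/
def cD {k : Type*} [CommRing k] (i : ZMod 3 → k) (t : k) (u₁ u₂ u₃ : ZMod 3) : k :=
  i (4 * u₁ * u₃) * (i u₂ * t) * (t ^ 2 + 4) -
    i u₁ * (i (u₂ * u₃) * t ^ 2 + 1) * (t ^ 3 - t * (t ^ 2 + 4))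

/-- Constant coefficient at `T = t`. -/
def cE {k : Type*} [CommRing k] (i : ZMod 3 → k) (t : k) (u₁ u₂ u₃ : ZMod 3) : k :=
  i u₁ * (i (u₁ * u₂ * u₃) * t ^ 3 + i (u₁ + u₃) * t) * (t ^ 3 - t * (t ^ 2 + 4)) -
    i (4 * u₁ * u₃) * (i (u₁ * u₂) * t ^ 2 + 1) * (t ^ 2 + 4)

/-- `NoFactor` for the quartic with parameters `u₁, u₂, u₃` specialized at `T = t`. -/
def NoFactorAt {k : Type*} [CommRing k] (i : ZMod 3 → k) (t : k) (u₁ u₂ u₃ : ZMod 3) : Prop :=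
  NoFactor (cA i t u₂ u₃) (cB i t u₁ u₂ u₃) (cD i t u₁ u₂ u₃) (cE i t u₁ u₂ u₃)

instance {k : Type*} [CommRing k] [Fintype k] [DecidableEq k] (i : ZMod 3 → k) (t : k)
    (u₁ u₂ u₃ : ZMod 3) : Decidable (NoFactorAt i t u₁ u₂ u₃) := by
  unfold NoFactorAt
  infer_instance

lemma no_factor_F3 : ∀ u₁ u₂ u₃ : ZMod 3, u₁ ≠ 0 → u₂ ≠ 0 → u₃ ≠ 0 → (u₂ = u₃ ∧ u₁ ≠ u₂) →
    NoFactorAt (algebraMap (ZMod 3) (ZMod 3)) 1 u₁ u₂ u₃ := by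
  decide +kernel

-- The `Decidable` instance of the statement exceeds the default size bound.
set_option synthInstance.maxSize 100000 in
set_option synthInstance.maxHeartbeats 1000000 in
lemma no_factor_F9 : ∀ u₁ u₂ u₃ : ZMod 3, u₁ ≠ 0 → u₂ ≠ 0 → u₃ ≠ 0 → ¬ (u₂ = u₃ ∧ u₁ ≠ u₂) →
    NoFactorAt (algebraMap (ZMod 3) F9) ⟨0, 1⟩ u₁ u₂ u₃ := by
  decide +kernel

theorem stmt_14
    (u₁ u₂ u₃ : ZMod 3) (hu₁ : u₁ ≠ 0) (hu₂ : u₂ ≠ 0) (hu₃ : u₃ ≠ 0)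
    (x₂ y₂ x₃ y₃ F R : Polynomial (ZMod 3))
    (hx₂ : x₂ = C (u₁ * u₂) * X ^ 2 + 1)
    (hy₂ : y₂ = C u₂ * X)
    (hx₃ : x₃ = C (u₁ * u₂ * u₃) * X ^ 3 + C (u₁ + u₃) * X)
    (hy₃ : y₃ = C (u₂ * u₃) * X ^ 2 + 1)
    (hF : F = X ^ 2 + 4)
    (hR : R = X ^ 3 - X * F)
    (c : Polynomial (ZMod 3) →+* RatFunc (ZMod 3))
    (hc : c = algebraMap (Polynomial (ZMod 3)) (RatFunc (ZMod 3))) :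
    Irreducible
      (C (c y₃) * X ^ 4 - C (c x₃) * X ^ 3
        + C (c (C (4 * u₁ * u₃) * y₂ * F - C u₁ * y₃ * R)) * X
        + C (c (C u₁ * x₃ * R - C (4 * u₁ * u₃) * x₂ * F))
        : Polynomial (RatFunc (ZMod 3))) := by
  have hprim1 : y₃ - C u₂ * X * (x₃ - C u₁ * X * y₃) = 1 := by
    rw [hx₃, hy₃]
    simp only [C_mul, C_add]
    ring
  set d := C (4 * u₁ * u₃) * y₂ * F - C u₁ * y₃ * R with hd
  set e := C u₁ * x₃ * R - C (4 * u₁ * u₃) * x₂ * F with he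
  have hy0 : y₃ ≠ 0 := by
    intro h
    have := congrArg (coeff · 0) (hy₃.symm.trans h)
    simp at this
  set f : (ZMod 3)[X][X] := C y₃ * X ^ 4 + C (-x₃) * X ^ 3 + C d * X + C e with hf
  have hdeg : f.natDegree = 4 := by rw [hf]; compute_degree!
  have hc4 : f.coeff 4 = y₃ := by simp [hf, -map_neg, coeff_X_pow]
  have hc3 : f.coeff 3 = -x₃ := by simp [hf, -map_neg, coeff_X_pow]
  have hlc : f.leadingCoeff = y₃ := by rw [leadingCoeff, hdeg, hc4]
  have hprim : f.IsPrimitive := by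
    intro r hr
    rw [C_dvd_iff_dvd_coeff] at hr
    have h4 := hr 4
    have h3 := hr 3
    rw [hc4] at h4
    rw [hc3, dvd_neg] at h3
    rw [isUnit_iff_dvd_one, ← hprim1]
    exact dvd_sub h4 ((dvd_sub h3 (h4.mul_left _)).mul_left _)
  have main : ∀ (k : Type) [Field k] [Algebra (ZMod 3) k] (t : k),
      NoFactorAt (algebraMap (ZMod 3) k) t u₁ u₂ u₃ → Irreducible f := by
    intro k _ _ t ht
    obtain ⟨h1, h2, h3⟩ := ht
    let φ : (ZMod 3)[X] →+* k := eval₂RingHom (algebraMap (ZMod 3) k) t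
    have ea : φ y₃ = cA (algebraMap (ZMod 3) k) t u₂ u₃ := by
      simp [φ, hy₃, cA]
    have eb : φ (-x₃) = cB (algebraMap (ZMod 3) k) t u₁ u₂ u₃ := by
      simp [φ, hx₃, cB]
    have ed : φ d = cD (algebraMap (ZMod 3) k) t u₁ u₂ u₃ := by
      simp [φ, hd, hy₂, hF, hR, hy₃, cD]
    have ee : φ e = cE (algebraMap (ZMod 3) k) t u₁ u₂ u₃ := by
      simp [φ, he, hx₃, hF, hR, hx₂, cE]
    refine irreducible_of_irreducible_map_of_isPrimitive φ f hprim (by rwa [hlc, ea]) ?_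
    have hm : f.map φ = C (φ y₃) * X ^ 4 + C (φ (-x₃)) * X ^ 3 + C (φ d) * X + C (φ e) := by
      rw [hf]
      simp only [Polynomial.map_add, Polynomial.map_mul, Polynomial.map_pow, map_C, map_X]
    rw [hm, ea, eb, ed, ee]
    exact irreducible_quartic_of_not_dvd _ _ _ _ h1 h2 h3
  have hirr : Irreducible f := by
    by_cases hu : u₂ = u₃ ∧ u₁ ≠ u₂
    · exact main (ZMod 3) 1 (no_factor_F3 u₁ u₂ u₃ hu₁ hu₂ hu₃ hu)
    · exact main F9 ⟨0, 1⟩ (no_factor_F9 u₁ u₂ u₃ hu₁ hu₂ hu₃ hu)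
  rw [hprim.irreducible_iff_irreducible_map_fraction_map (K := RatFunc (ZMod 3)), ← hc] at hirr
  convert hirr using 1
  rw [hf]
  simp only [Polynomial.map_add, Polynomial.map_mul, Polynomial.map_pow, map_C, map_X, map_neg,
    Polynomial.map_neg, neg_mul, sub_eq_add_neg]
end
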